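/- FL¹ bound on Picard iterates: let k ≥ 2 be an integer. There exists a constant C > 0, depending only on k, such that for all v₀, v₁ ∈ L¹(ℝ), every j ∈ ℕ and every T with 0 < T ≤ 1, the Picard iterate satisfies ‖Ξ̂_j(v₀,v₁)(T)‖_{L¹(ℝ)} ≤ C^j · T^{2j} · (‖v₀‖_{L¹(ℝ)} + ‖v₁‖_{L¹(ℝ)})^{(k−1)j + 1}. -/

import Mathlib

open MeasureTheory Filter
open scoped ENNReal

noncomputable section

/-- The Japanese bracket weight `⟨ξ⟩^s = (1+ξ²)^(s/2)`. -/
def jbw (s ξ : ℝ) : ℝ := (1 + ξ ^ 2) ^ (s / 2)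

/-- `λ(ξ) = |ξ|/⟨ξ⟩`. -/
def lam (ξ : ℝ) : ℝ := |ξ| / (1 + ξ ^ 2) ^ ((1 : ℝ) / 2)

/-- The multiplier `m(t,ξ) = sin(tλ(ξ))/λ(ξ)` for `ξ ≠ 0`, `m(t,0) = t`. -/
def mker (t ξ : ℝ) : ℝ := if ξ = 0 then t else Real.sin (t * lam ξ) / lam ξ

/-- Fourier side linear propagator `Ŝ(t)(v₀,v₁)`. -/
def Shat (t : ℝ) (v₀ v₁ : ℝ → ℂ) (ξ : ℝ) : ℂ :=
  (Real.cos (t * lam ξ) : ℂ) * v₀ ξ + (mker t ξ : ℂ) * v₁ ξ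

/-- Convolution of complex valued functions on `ℝ`. -/
def conv (f g : ℝ → ℂ) (ξ : ℝ) : ℂ := ∫ η, f η * g (ξ - η)

/-- Iterated convolution of a list of functions. -/
def convList : List (ℝ → ℂ) → ℝ → ℂ
  | [] => fun _ => 0
  | [f] => f
  | f :: g :: fs => conv f (convList (g :: fs))

/-- Fourier side Duhamel operator `Î_k`. -/
def Ihat (k : ℕ) (w : Fin k → ℝ → ℝ → ℂ) (t ξ : ℝ) : ℂ :=
  ∫ t' in (0:ℝ)..t,
    ((Real.sin ((t - t') * lam ξ) * lam ξ : ℝ) : ℂ) * convList (List.ofFn fun i => w i t') ξ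

/-- Continuity of a curve of functions with respect to the `L¹` norm, on `[0,T]`. -/
def ContinuousL1On (T : ℝ) (v : ℝ → ℝ → ℂ) : Prop :=
  ∀ t₀ ∈ Set.Icc (0 : ℝ) T,
    Tendsto (fun t => eLpNorm (fun ξ => v t ξ - v t₀ ξ) 1 volume)
      (nhdsWithin t₀ (Set.Icc (0 : ℝ) T)) (nhds 0)

/-- Fourier-side solution of the generalized improved Boussinesq equation with
nonlinearity `u^k` and data `(v₀, v₁)` on `[0, T]`. -/
def IsGIBqSol (k : ℕ) (T : ℝ) (v₀ v₁ : ℝ → ℂ) (v : ℝ → ℝ → ℂ) : Prop :=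
  (∀ t ∈ Set.Icc (0 : ℝ) T, Integrable (v t)) ∧
  ContinuousL1On T v ∧
  ∀ t ∈ Set.Icc (0 : ℝ) T,
    ∀ᵐ ξ ∂volume, v t ξ = Shat t v₀ v₁ ξ + Ihat k (fun _ => v) t ξ

/-- Picard iterates `Ξ̂_j` for gIBq on the Fourier side. -/
def Xi (k : ℕ) (v₀ v₁ : ℝ → ℂ) : ℕ → ℝ → ℝ → ℂ
  | 0 => fun t => Shat t v₀ v₁
  | (j+1) => fun t ξ =>
      ∑ p ∈ (Finset.Nat.antidiagonalTuple k j).attach,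
        Ihat k (fun i => Xi k v₀ v₁ (p.1 i)) t ξ
decreasing_by
  have hsum := Finset.Nat.mem_antidiagonalTuple.mp p.2
  have hle : p.1 i ≤ j := by
    calc p.1 i ≤ ∑ i', p.1 i' :=
          Finset.single_le_sum (fun _ _ => Nat.zero_le _) (Finset.mem_univ i)
      _ = j := hsum
  omega

/-- The `FL^{s,p}` norm on the Fourier side: `‖⟨ξ⟩^s w‖_{L^p}`. -/
def FLnorm (s : ℝ) (p : ℝ≥0∞) (w : ℝ → ℂ) : ℝ≥0∞ :=
  eLpNorm (fun ξ => jbw s ξ * ‖w ξ‖) p volume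

end

lemma lam_nonneg' (ξ : ℝ) : 0 ≤ lam ξ := by unfold lam; positivity

lemma lam_le_one' (ξ : ℝ) : lam ξ ≤ 1 := by
  unfold lam
  rw [← Real.sqrt_eq_rpow]
  apply div_le_one_of_le₀ _ (Real.sqrt_nonneg _)
  apply Real.le_sqrt_of_sq_le
  rw [sq_abs]; linarith

lemma measurable_lam' : Measurable lam := by
  unfold lam; fun_prop

lemma measurable_mker' : Measurable (fun q : ℝ × ℝ => mker q.1 q.2) := by
  unfold mker
  have := measurable_lam'
  refine Measurable.ite ?_ (by fun_prop) (by fun_prop)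
  exact measurable_snd (measurableSet_singleton 0)

lemma abs_mker_le' (t ξ : ℝ) (ht : 0 ≤ t) : |mker t ξ| ≤ t := by
  unfold mker
  split_ifs with h
  · rw [abs_of_nonneg ht]
  · rw [abs_div, abs_of_nonneg (lam_nonneg' ξ)]
    apply div_le_of_le_mul₀ (lam_nonneg' ξ) ht
    calc |Real.sin (t * lam ξ)| ≤ |t * lam ξ| := Real.abs_sin_le_abs
      _ = t * lam ξ := abs_of_nonneg (mul_nonneg ht (lam_nonneg' ξ))

lemma measurable_Shat' {v₀ v₁ : ℝ → ℂ} (h₀ : Measurable v₀) (h₁ : Measurable v₁) :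
    Measurable (fun q : ℝ × ℝ => Shat q.1 v₀ v₁ q.2) := by
  unfold Shat
  have := measurable_lam'
  have := measurable_mker'
  fun_prop

lemma conv_congr' {f f' g g' : ℝ → ℂ} (hf : f =ᵐ[volume] f') (hg : g =ᵐ[volume] g') :
    conv f g = conv f' g' := by
  funext ξ
  unfold conv
  apply integral_congr_ae
  have h2 : (fun η => g (ξ - η)) =ᵐ[volume] fun η => g' (ξ - η) :=
    (Measure.measurePreserving_sub_left volume ξ).quasiMeasurePreserving.ae_eq_comp hg
  filter_upwards [hf, h2] with η a b
  rw [a, b]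

lemma convList_congr' (n : ℕ) (f f' : Fin (n + 1) → ℝ → ℂ) (h : ∀ i, f i =ᵐ[volume] f' i) :
    convList (List.ofFn f) =ᵐ[volume] convList (List.ofFn f') := by
  induction n with
  | zero => simpa [convList] using h 0
  | succ n ih =>
    have := ih (fun i => f i.succ) (fun i => f' i.succ) (fun i => h _)
    rw [List.ofFn_succ, List.ofFn_succ (f := f')]
    rw [List.ofFn_succ, List.ofFn_succ (f := fun i => f' i.succ)] at this ⊢
    simp only [convList]
    rw [conv_congr' (h 0) this]

lemma convList_congr_eq' (n : ℕ) (f f' : Fin (n + 2) → ℝ → ℂ) (h : ∀ i, f i =ᵐ[volume] f' i) :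
    convList (List.ofFn f) = convList (List.ofFn f') := by
  have := convList_congr' n (fun i => f i.succ) (fun i => f' i.succ) (fun i => h _)
  rw [List.ofFn_succ, List.ofFn_succ (f := f')]
  rw [List.ofFn_succ, List.ofFn_succ (f := fun i => f' i.succ)] at this ⊢
  simp only [convList]
  rw [conv_congr' (h 0) this]

lemma Xi_congr' (n : ℕ) {v₀ v₁ u₀ u₁ : ℝ → ℂ} (h₀ : v₀ =ᵐ[volume] u₀) (h₁ : v₁ =ᵐ[volume] u₁)
    (j : ℕ) : ∀ t, Xi (n + 2) v₀ v₁ j t =ᵐ[volume] Xi (n + 2) u₀ u₁ j t := by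
  induction j using Nat.strong_induction_on with
  | _ j ih =>
    intro t
    cases j with
    | zero =>
      simp only [Xi]
      filter_upwards [h₀, h₁] with ξ a b
      simp only [Shat, a, b]
    | succ j =>
      refine Filter.Eventually.of_forall fun ξ => ?_
      simp only [Xi]
      refine Finset.sum_congr rfl fun p _ => ?_
      unfold Ihat
      have key : ∀ t', convList (List.ofFn fun i => Xi (n + 2) v₀ v₁ (p.1 i) t') =
          convList (List.ofFn fun i => Xi (n + 2) u₀ u₁ (p.1 i) t') := by
        intro t'
        apply convList_congr_eq'
        intro i
        apply ih
        have hsum := Finset.Nat.mem_antidiagonalTuple.mp p.2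
        have hle : p.1 i ≤ ∑ i', p.1 i' :=
          Finset.single_le_sum (fun _ _ => Nat.zero_le _) (Finset.mem_univ i)
        omega
      simp only [key]

lemma measurable_conv' {f g : ℝ → ℝ → ℂ} (hf : Measurable (fun q : ℝ × ℝ => f q.1 q.2))
    (hg : Measurable (fun q : ℝ × ℝ => g q.1 q.2)) :
    Measurable (fun q : ℝ × ℝ => conv (f q.1) (g q.1) q.2) := by
  unfold conv
  apply StronglyMeasurable.measurable
  have : Measurable (fun r : (ℝ × ℝ) × ℝ => f r.1.1 r.2 * g r.1.1 (r.1.2 - r.2)) := by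
    apply Measurable.mul
    · exact hf.comp (f := fun r : (ℝ × ℝ) × ℝ => (r.1.1, r.2)) (by fun_prop)
    · exact hg.comp (f := fun r : (ℝ × ℝ) × ℝ => (r.1.1, r.1.2 - r.2)) (by fun_prop)
  exact this.stronglyMeasurable.integral_prod_right'

lemma measurable_convList' (n : ℕ) (f : Fin (n + 1) → ℝ → ℝ → ℂ)
    (h : ∀ i, Measurable (fun q : ℝ × ℝ => f i q.1 q.2)) :
    Measurable (fun q : ℝ × ℝ => convList (List.ofFn fun i => f i q.1) q.2) := by
  induction n with
  | zero => simpa [convList] using h 0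
  | succ n ih =>
    have := ih (fun i => f i.succ) (fun i => h _)
    have h2 := measurable_conv' (h 0)
      (g := fun t => convList (List.ofFn fun i : Fin (n + 1) => f i.succ t)) this
    convert h2 using 2 with q
    rw [List.ofFn_succ, List.ofFn_succ]
    simp only [convList]

lemma lintegral_conv_le' {f g : ℝ → ℂ} (hf : Measurable f) (hg : Measurable g) :
    ∫⁻ ξ, ‖conv f g ξ‖ₑ ≤ (∫⁻ ξ, ‖f ξ‖ₑ) * ∫⁻ ξ, ‖g ξ‖ₑ := by
  calc ∫⁻ ξ, ‖conv f g ξ‖ₑ ≤ ∫⁻ ξ, ∫⁻ η, ‖f η‖ₑ * ‖g (ξ - η)‖ₑ := by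
        apply lintegral_mono
        intro ξ
        refine (enorm_integral_le_lintegral_enorm _).trans ?_
        simp [enorm_mul]
    _ = ∫⁻ η, ∫⁻ ξ, ‖f η‖ₑ * ‖g (ξ - η)‖ₑ := by
        apply lintegral_lintegral_swap
        apply Measurable.aemeasurable
        unfold Function.uncurry
        fun_prop
    _ = ∫⁻ η, ‖f η‖ₑ * ∫⁻ ξ, ‖g ξ‖ₑ := by
        congr 1; funext η
        rw [lintegral_const_mul _ (by fun_prop)]
        rw [lintegral_sub_right_eq_self (fun ξ => ‖g ξ‖ₑ) η]
    _ = _ := by rw [lintegral_mul_const _ (by fun_prop)]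

lemma measurable_convList_one' (n : ℕ) (f : Fin (n + 1) → ℝ → ℂ)
    (h : ∀ i, Measurable (f i)) : Measurable (convList (List.ofFn f)) := by
  have := measurable_convList' n (fun i _ => f i) (fun i => (h i).comp measurable_snd)
  exact this.comp (f := fun x : ℝ => ((0 : ℝ), x)) (by fun_prop)

lemma lintegral_convList_le' (n : ℕ) (f : Fin (n + 1) → ℝ → ℂ) (h : ∀ i, Measurable (f i)) :
    ∫⁻ ξ, ‖convList (List.ofFn f) ξ‖ₑ ≤ ∏ i, ∫⁻ ξ, ‖f i ξ‖ₑ := by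
  induction n with
  | zero => simp [convList]
  | succ n ih =>
    have h1 := ih (fun i => f i.succ) (fun i => h _)
    have h2 := measurable_convList_one' n (fun i => f i.succ) (fun i => h _)
    rw [Fin.prod_univ_succ]
    have h3 : convList (List.ofFn f) =
        conv (f 0) (convList (List.ofFn fun i : Fin (n + 1) => f i.succ)) := by
      rw [List.ofFn_succ, List.ofFn_succ]
      simp only [convList]
    rw [h3]
    refine (lintegral_conv_le' (h 0) h2).trans ?_
    gcongr

lemma measurable_Ihat' (n : ℕ) (w : Fin (n + 1) → ℝ → ℝ → ℂ)
    (h : ∀ i, Measurable (fun q : ℝ × ℝ => w i q.1 q.2)) :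
    Measurable (fun q : ℝ × ℝ => Ihat (n + 1) w q.1 q.2) := by
  unfold Ihat
  have hl := measurable_lam'
  have hc := measurable_convList' n w h
  have hF : Measurable (fun r : (ℝ × ℝ) × ℝ =>
      ((Real.sin ((r.1.1 - r.2) * lam r.1.2) * lam r.1.2 : ℝ) : ℂ) *
        convList (List.ofFn fun i => w i r.2) r.1.2) := by
    apply Measurable.mul
    · fun_prop
    · exact hc.comp (f := fun r : (ℝ × ℝ) × ℝ => (r.2, r.1.2)) (by fun_prop)
  simp only [intervalIntegral]
  apply Measurable.sub
  · simp only [← integral_indicator (measurableSet_Ioc)]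
    apply StronglyMeasurable.measurable
    have hS : MeasurableSet {r : (ℝ × ℝ) × ℝ | 0 < r.2 ∧ r.2 ≤ r.1.1} :=
      MeasurableSet.inter
        (measurableSet_lt (f := fun r : (ℝ × ℝ) × ℝ => 0) (g := fun r => r.2)
          (by fun_prop) (by fun_prop))
        (measurableSet_le (f := fun r : (ℝ × ℝ) × ℝ => r.2) (g := fun r => r.1.1)
          (by fun_prop) (by fun_prop))
    exact ((hF.indicator hS).stronglyMeasurable.integral_prod_right')
  · simp only [← integral_indicator (measurableSet_Ioc)]
    apply StronglyMeasurable.measurable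
    have hS : MeasurableSet {r : (ℝ × ℝ) × ℝ | r.1.1 < r.2 ∧ r.2 ≤ 0} :=
      MeasurableSet.inter
        (measurableSet_lt (f := fun r : (ℝ × ℝ) × ℝ => r.1.1) (g := fun r => r.2)
          (by fun_prop) (by fun_prop))
        (measurableSet_le (f := fun r : (ℝ × ℝ) × ℝ => r.2) (g := fun r => 0)
          (by fun_prop) (by fun_prop))
    exact ((hF.indicator hS).stronglyMeasurable.integral_prod_right')

lemma lintegral_Ihat_le' (n : ℕ) (w : Fin (n + 1) → ℝ → ℝ → ℂ)
    (h : ∀ i, Measurable (fun q : ℝ × ℝ => w i q.1 q.2)) (t : ℝ) (ht : 0 ≤ t)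
    (B : Fin (n + 1) → ℝ≥0∞) (hB : ∀ i, ∀ s, 0 ≤ s → s ≤ t → ∫⁻ ξ, ‖w i s ξ‖ₑ ≤ B i) :
    ∫⁻ ξ, ‖Ihat (n + 1) w t ξ‖ₑ ≤ ENNReal.ofReal t ^ 2 * ∏ i, B i := by
  have hc := measurable_convList' n w h
  have hw : ∀ i s, Measurable (w i s) := fun i s =>
    (h i).comp (f := fun x : ℝ => (s, x)) (by fun_prop)
  calc ∫⁻ ξ, ‖Ihat (n + 1) w t ξ‖ₑ
      ≤ ∫⁻ ξ, ∫⁻ s in Set.Ioc 0 t, ENNReal.ofReal t *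
          ‖convList (List.ofFn fun i => w i s) ξ‖ₑ := by
        apply lintegral_mono
        intro ξ
        simp only [Ihat]
        rw [intervalIntegral.integral_of_le ht]
        refine (enorm_integral_le_lintegral_enorm _).trans ?_
        apply setLIntegral_mono' measurableSet_Ioc
        intro s hs
        rw [enorm_mul]
        gcongr
        rw [← ofReal_norm, Complex.norm_real, Real.norm_eq_abs]
        apply ENNReal.ofReal_le_ofReal
        have l0 := lam_nonneg' ξ
        have l1 := lam_le_one' ξ
        rw [abs_mul, abs_of_nonneg l0]
        have e1 : |Real.sin ((t - s) * lam ξ)| ≤ (t - s) * lam ξ :=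
          Real.abs_sin_le_abs.trans
            (abs_of_nonneg (mul_nonneg (by linarith [hs.2]) l0)).le
        have e2 : (t - s) * lam ξ ≤ t := by
          have := hs.1
          have := hs.2
          nlinarith
        have e3 := abs_nonneg (Real.sin ((t - s) * lam ξ))
        nlinarith
    _ = ∫⁻ s in Set.Ioc 0 t, ∫⁻ ξ, ENNReal.ofReal t *
          ‖convList (List.ofFn fun i => w i s) ξ‖ₑ := by
        apply lintegral_lintegral_swap
        apply Measurable.aemeasurable
        apply Measurable.const_mul
        apply Measurable.enorm
        exact hc.comp measurable_swap
    _ ≤ ∫⁻ s in Set.Ioc 0 t, ENNReal.ofReal t * ∏ i, B i := by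
        apply setLIntegral_mono' measurableSet_Ioc
        intro s hs
        rw [lintegral_const_mul _ (measurable_convList_one' n _ fun i => hw i s).enorm]
        gcongr
        refine (lintegral_convList_le' n _ fun i => hw i s).trans ?_
        exact Finset.prod_le_prod' fun i _ => hB i s hs.1.le hs.2
    _ = _ := by
        rw [setLIntegral_const, Real.volume_Ioc, sub_zero]
        ring

/-- Combinatorial majorant of the Picard iterates. -/
noncomputable def acoef (k : ℕ) : ℕ → ℝ≥0∞
  | 0 => 1
  | (j+1) => ∑ p ∈ (Finset.Nat.antidiagonalTuple k j).attach, ∏ i : Fin k, acoef k (p.1 i)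
decreasing_by
  have hsum := Finset.Nat.mem_antidiagonalTuple.mp p.2
  have hle : p.1 i ≤ j := by
    calc p.1 i ≤ ∑ i', p.1 i' :=
          Finset.single_le_sum (fun _ _ => Nat.zero_le _) (Finset.mem_univ i)
      _ = j := hsum
  omega

lemma acoef_succ (k j : ℕ) : acoef k (j + 1) =
    ∑ p ∈ Finset.Nat.antidiagonalTuple k j, ∏ i : Fin k, acoef k (p i) := by
  rw [acoef, Finset.sum_attach (Finset.Nat.antidiagonalTuple k j)
    (fun p => ∏ i : Fin k, acoef k (p i))]

lemma acoef_partial (k : ℕ) (x : ℝ≥0∞) (hx : x * 2 ^ k ≤ 1) (N : ℕ) :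
    ∑ j ∈ Finset.range (N + 1), acoef k j * x ^ j ≤ 2 := by
  induction N with
  | zero => simp [acoef]
  | succ N ih =>
    rw [Finset.sum_range_succ']
    have h1 : ∑ j ∈ Finset.range (N + 1), acoef k (j + 1) * x ^ (j + 1) ≤
        x * (∑ j ∈ Finset.range (N + 1), acoef k j * x ^ j) ^ k := by
      have e : (∑ j ∈ Finset.range (N + 1), acoef k j * x ^ j) ^ k =
          ∏ _i : Fin k, ∑ j ∈ Finset.range (N + 1), acoef k j * x ^ j := by simp
      rw [e, Finset.prod_univ_sum, Finset.mul_sum]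
      have e2 : ∀ j ∈ Finset.range (N + 1), acoef k (j + 1) * x ^ (j + 1) =
          ∑ p ∈ Finset.Nat.antidiagonalTuple k j,
            x * ∏ i : Fin k, (acoef k (p i) * x ^ p i) := by
        intro j _
        rw [acoef_succ, Finset.sum_mul]
        refine Finset.sum_congr rfl fun p hp => ?_
        rw [Finset.prod_mul_distrib, Finset.prod_pow_eq_pow_sum,
          Finset.Nat.mem_antidiagonalTuple.mp hp]
        ring
      rw [Finset.sum_congr rfl e2, ← Finset.sum_biUnion]
      · apply Finset.sum_le_sum_of_subset
        intro p hp
        simp only [Finset.mem_biUnion, Finset.Nat.mem_antidiagonalTuple] at hp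
        obtain ⟨j, hj, hp⟩ := hp
        rw [Fintype.mem_piFinset]
        intro i
        have hle : p i ≤ ∑ i', p i' :=
          Finset.single_le_sum (fun _ _ => Nat.zero_le _) (Finset.mem_univ i)
        rw [Finset.mem_range] at hj ⊢
        omega
      · intro a _ b _ hab
        simp only [Function.onFun]
        rw [Finset.disjoint_left]
        intro p hp hp'
        rw [Finset.Nat.mem_antidiagonalTuple] at hp hp'
        exact hab (hp.symm.trans hp')
    calc _ ≤ x * 2 ^ k + 1 := by
          refine add_le_add (h1.trans ?_) (by simp [acoef])
          gcongr
      _ ≤ 1 + 1 := by gcongr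
      _ = 2 := by norm_num

lemma acoef_le (k j : ℕ) : acoef k j ≤ (2 ^ (k + 1)) ^ j := by
  cases j with
  | zero => simp [acoef]
  | succ j =>
    have h2 : (2 : ℝ≥0∞) ^ k ≠ 0 := by positivity
    have h3 : (2 : ℝ≥0∞) ^ k ≠ ⊤ := by finiteness
    have h := acoef_partial k ((2 ^ k)⁻¹) (ENNReal.inv_mul_cancel h2 h3).le (j + 1)
    have h4 : acoef k (j + 1) * ((2 ^ k)⁻¹) ^ (j + 1) ≤ 2 :=
      (Finset.single_le_sum (f := fun j => acoef k j * ((2 ^ k)⁻¹) ^ j)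
        (fun _ _ => zero_le) (Finset.mem_range.mpr (Nat.lt_succ_self (j + 1)))).trans h
    calc acoef k (j + 1) = acoef k (j + 1) * ((2 ^ k)⁻¹) ^ (j + 1) * (2 ^ k) ^ (j + 1) := by
          rw [mul_assoc, ← mul_pow, ENNReal.inv_mul_cancel h2 h3]; simp
      _ ≤ 2 * (2 ^ k) ^ (j + 1) := by gcongr
      _ ≤ 2 ^ (j + 1) * (2 ^ k) ^ (j + 1) := by
          gcongr
          exact le_self_pow (by norm_num) (by omega)
      _ = _ := by rw [← mul_pow]; ring

lemma measurable_Xi' (n : ℕ) {v₀ v₁ : ℝ → ℂ} (h₀ : Measurable v₀) (h₁ : Measurable v₁) (j : ℕ) :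
    Measurable (fun q : ℝ × ℝ => Xi (n + 1) v₀ v₁ j q.1 q.2) := by
  induction j using Nat.strong_induction_on with
  | _ j ih =>
    cases j with
    | zero => simpa only [Xi] using measurable_Shat' h₀ h₁
    | succ j =>
      simp only [Xi]
      refine Finset.measurable_sum _ fun p _ => ?_
      refine measurable_Ihat' n _ fun i => ?_
      apply ih
      have hsum := Finset.Nat.mem_antidiagonalTuple.mp p.2
      have hle : p.1 i ≤ ∑ i', p.1 i' :=
        Finset.single_le_sum (fun _ _ => Nat.zero_le _) (Finset.mem_univ i)
      omega

lemma lintegral_Xi_le' (n : ℕ) {v₀ v₁ : ℝ → ℂ} (h₀ : Measurable v₀) (h₁ : Measurable v₁) (j : ℕ) :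
    ∀ t : ℝ, 0 ≤ t → t ≤ 1 → ∫⁻ ξ, ‖Xi (n + 1) v₀ v₁ j t ξ‖ₑ ≤
      acoef (n + 1) j * ENNReal.ofReal t ^ (2 * j) *
        ((∫⁻ ξ, ‖v₀ ξ‖ₑ) + ∫⁻ ξ, ‖v₁ ξ‖ₑ) ^ (n * j + 1) := by
  set M := (∫⁻ ξ, ‖v₀ ξ‖ₑ) + ∫⁻ ξ, ‖v₁ ξ‖ₑ with hM
  induction j using Nat.strong_induction_on with
  | _ j ih =>
    intro t ht ht1
    cases j with
    | zero =>
      simp only [Xi, acoef, mul_zero, pow_zero, zero_add, pow_one, one_mul]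
      rw [hM, ← lintegral_add_left h₀.enorm]
      apply lintegral_mono
      intro ξ
      simp only [Shat]
      refine (enorm_add_le _ _).trans ?_
      rw [enorm_mul, enorm_mul]
      have a1 : ‖(Real.cos (t * lam ξ) : ℂ)‖ₑ ≤ 1 := by
        rw [← ofReal_norm, Complex.norm_real, Real.norm_eq_abs, ENNReal.ofReal_le_one]
        exact Real.abs_cos_le_one _
      have a2 : ‖(mker t ξ : ℂ)‖ₑ ≤ 1 := by
        rw [← ofReal_norm, Complex.norm_real, Real.norm_eq_abs, ENNReal.ofReal_le_one]
        exact (abs_mker_le' t ξ ht).trans ht1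
      exact add_le_add (mul_le_of_le_one_left' a1) (mul_le_of_le_one_left' a2)
    | succ j =>
      simp only [Xi]
      have hmeas : ∀ p : {x // x ∈ Finset.Nat.antidiagonalTuple (n + 1) j},
          Measurable (fun ξ => Ihat (n + 1) (fun i => Xi (n + 1) v₀ v₁ (p.1 i)) t ξ) := fun p =>
        (measurable_Ihat' n _ fun i => measurable_Xi' n h₀ h₁ (p.1 i)).comp
          (f := fun x : ℝ => (t, x)) (by fun_prop)
      calc _ ≤ ∫⁻ ξ, ∑ p ∈ (Finset.Nat.antidiagonalTuple (n + 1) j).attach,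
            ‖Ihat (n + 1) (fun i => Xi (n + 1) v₀ v₁ (p.1 i)) t ξ‖ₑ :=
            lintegral_mono fun ξ => enorm_sum_le _ _
        _ = ∑ p ∈ (Finset.Nat.antidiagonalTuple (n + 1) j).attach,
            ∫⁻ ξ, ‖Ihat (n + 1) (fun i => Xi (n + 1) v₀ v₁ (p.1 i)) t ξ‖ₑ :=
            lintegral_finsetSum _ fun p _ => (hmeas p).enorm
        _ ≤ ∑ p ∈ (Finset.Nat.antidiagonalTuple (n + 1) j).attach,
            (∏ i, acoef (n + 1) (p.1 i)) *
              (ENNReal.ofReal t ^ (2 * (j + 1)) * M ^ (n * (j + 1) + 1)) := by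
            refine Finset.sum_le_sum fun p _ => ?_
            have hsum := Finset.Nat.mem_antidiagonalTuple.mp p.2
            refine (lintegral_Ihat_le' n _ (fun i => measurable_Xi' n h₀ h₁ (p.1 i)) t ht
              (fun i => acoef (n + 1) (p.1 i) * ENNReal.ofReal t ^ (2 * p.1 i) *
                M ^ (n * p.1 i + 1)) ?_).trans ?_
            · intro i s hs hst
              have hle : p.1 i ≤ ∑ i', p.1 i' :=
                Finset.single_le_sum (fun _ _ => Nat.zero_le _) (Finset.mem_univ i)
              refine (ih (p.1 i) (by omega) s hs (hst.trans ht1)).trans ?_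
              gcongr
            · apply le_of_eq
              rw [Finset.prod_mul_distrib, Finset.prod_mul_distrib, Finset.prod_pow_eq_pow_sum,
                Finset.prod_pow_eq_pow_sum, Finset.sum_add_distrib, ← Finset.mul_sum,
                ← Finset.mul_sum, hsum]
              simp only [Finset.sum_const, Finset.card_univ, Fintype.card_fin, smul_eq_mul]
              ring
        _ = _ := by
            rw [← Finset.sum_mul, acoef, mul_assoc]

/-- `FL¹` bound on the Picard iterates:
`‖Ξ̂_j(v₀,v₁)(T)‖_{L¹} ≤ C^j T^{2j} (‖v₀‖_{L¹}+‖v₁‖_{L¹})^{(k-1)j+1}`. -/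
theorem picard_iterate_FL1_bound (k : ℕ) (hk : 2 ≤ k) :
    ∃ C : ℝ, 0 < C ∧
      ∀ v₀ v₁ : ℝ → ℂ, Integrable v₀ → Integrable v₁ →
        ∀ j : ℕ, ∀ T : ℝ, 0 < T → T ≤ 1 →
          eLpNorm (Xi k v₀ v₁ j T) 1 volume ≤
            ENNReal.ofReal C ^ j * ENNReal.ofReal T ^ (2 * j) *
              (eLpNorm v₀ 1 volume + eLpNorm v₁ 1 volume) ^ ((k - 1) * j + 1) := by
  obtain ⟨n, rfl⟩ : ∃ n, k = n + 2 := ⟨k - 2, by omega⟩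
  refine ⟨2 ^ (n + 2 + 1), by positivity, ?_⟩
  intro v₀ v₁ hv₀ hv₁ j T hT hT1
  have e₀ := hv₀.aestronglyMeasurable.ae_eq_mk
  have e₁ := hv₁.aestronglyMeasurable.ae_eq_mk
  have m₀ := hv₀.aestronglyMeasurable.stronglyMeasurable_mk.measurable
  have m₁ := hv₁.aestronglyMeasurable.stronglyMeasurable_mk.measurable
  rw [eLpNorm_congr_ae (Xi_congr' n e₀ e₁ j T), eLpNorm_congr_ae e₀, eLpNorm_congr_ae e₁]
  simp only [eLpNorm_one_eq_lintegral_enorm]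
  refine (lintegral_Xi_le' (n + 1) m₀ m₁ j T hT.le hT1).trans ?_
  have hC : ENNReal.ofReal (2 ^ (n + 2 + 1)) = 2 ^ (n + 2 + 1) := by
    rw [ENNReal.ofReal_pow (by norm_num)]; norm_num
  have hn : n + 2 - 1 = n + 1 := rfl
  rw [hC, hn]
  gcongr
  exact acoef_le _ _
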